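/- Let K be an algebraically closed field, let n >= 1, let z in FPF_n(I_n), and let (p,q) be an outer corner of dom(z) with n >= p > q. Define X^ss_{p,q} := {A in Mat^ss_n(K) : A_{ij} = 0 for all (i,j) in ([p] x [q]) union ([q] x [p])}. Then X^ss_z intersect X^ss_{p,q} equals the union over v in Psi(z,p) of X^ss_v. -/

import Mathlib

namespace Paper

/-!
We model a permutation of the positive integers `{1, 2, 3, ...}` as an `Equiv.Perm ℕ`
that fixes `0`; all notions below refer only to positive inputs.
-/

/-- The rank `r_w(i,j) = #{a ∈ [i] : w(a) ∈ [j]}` of the `i × j` partial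
permutation matrix of `w`, where `[k] = {1, ..., k}`. -/
def rnk (w : Equiv.Perm ℕ) (i j : ℕ) : ℕ :=
  ((Finset.Icc 1 i).filter fun a => w a ∈ Finset.Icc 1 j).card

/-- Right descent set `Des_R(w) = {i ≥ 1 : w(i) > w(i+1)}`. -/
def DesR (w : Equiv.Perm ℕ) : Set ℕ := {i | 1 ≤ i ∧ w (i + 1) < w i}

/-- Left descent set `Des_L(w) = Des_R(w⁻¹)`. -/
def DesL (w : Equiv.Perm ℕ) : Set ℕ := DesR w⁻¹

/-- `S_∞`: permutations of the positive integers fixing all but finitely many points. -/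
def SInfty : Set (Equiv.Perm ℕ) :=
  {w | w 0 = 0 ∧ Set.Finite {i : ℕ | w i ≠ i}}

/-- `S^{m,n}_∞ = {w ∈ S_∞ : Des_R(w) ⊆ [m], Des_L(w) ⊆ [n]}`. -/
def SmnInfty (m n : ℕ) : Set (Equiv.Perm ℕ) :=
  {w | w ∈ SInfty ∧ DesR w ⊆ Set.Icc 1 m ∧ DesL w ⊆ Set.Icc 1 n}

/-- The Rothe diagram `D(w) = {(i,j) : 0 < j < w(i), 0 < i < w⁻¹(j)}`. -/
def Rothe (w : Equiv.Perm ℕ) : Set (ℕ × ℕ) :=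
  {p | 0 < p.2 ∧ p.2 < w p.1 ∧ 0 < p.1 ∧ p.1 < w⁻¹ p.2}

/-- The function `1_FPF`, sending `i ↦ i - (-1)^i` on positive integers (it fixes `0`). -/
def oneFPF : ℕ → ℕ := fun i => if i % 2 = 1 then i + 1 else i - 1

/-- `I^FPF_∞`: fixed-point-free involutions of the positive integers agreeing with
`1_FPF` at all sufficiently large inputs. -/
def IFPFInfty : Set (Equiv.Perm ℕ) :=
  {z | z 0 = 0 ∧ (∀ i, 1 ≤ i → z i ≠ i) ∧ z * z = 1 ∧ ∃ N, ∀ i, N ≤ i → z i = oneFPF i}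

/-- The skew-symmetric Rothe diagram `D^ss(z) = {(i,j) : 0 < j < z(i), j < i < z(j)}`. -/
def Dss (z : Equiv.Perm ℕ) : Set (ℕ × ℕ) :=
  {p | 0 < p.2 ∧ p.2 < z p.1 ∧ p.2 < p.1 ∧ p.1 < z p.2}

/-- `FPF_n(I_n) = {z ∈ I^FPF_∞ : D^ss(z) ⊆ [n] × [n]}`. -/
def FPFIn (n : ℕ) : Set (Equiv.Perm ℕ) :=
  {z | z ∈ IFPFInfty ∧ Dss z ⊆ Set.Icc 1 n ×ˢ Set.Icc 1 n}

/-- `ℓ_fpf(z) = |D^ss(z)|`. -/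
noncomputable def ellFpf (z : Equiv.Perm ℕ) : ℕ := (Dss z).ncard

/-- Bruhat order on `I^FPF_∞`: reflexive-transitive closure of `z < (i,j) z (i,j)`
whenever `i < j` and `ℓ_fpf` goes up by exactly one. -/
def fpfBruhatLe (z y : Equiv.Perm ℕ) : Prop :=
  Relation.ReflTransGen
    (fun a b => ∃ i j : ℕ, 1 ≤ i ∧ i < j ∧
      b = Equiv.swap i j * a * Equiv.swap i j ∧ ellFpf b = ellFpf a + 1) z y

/-- `i` is a visible descent of `z` if `i ≥ 1` and `z(i+1) < min(i, z(i))`. -/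
def visibleDescent (z : Equiv.Perm ℕ) (i : ℕ) : Prop :=
  1 ≤ i ∧ z (i + 1) < min i (z i)

/-- `Ψ(z, p) = {(p,r) z (p,r) : r > p, ℓ_fpf((p,r) z (p,r)) = ℓ_fpf(z) + 1}`. -/
def PsiSet (z : Equiv.Perm ℕ) (p : ℕ) : Set (Equiv.Perm ℕ) :=
  {y | ∃ r : ℕ, p < r ∧ y = Equiv.swap p r * z * Equiv.swap p r ∧ ellFpf y = ellFpf z + 1}

/-- The dominant component `dom(z) = {(i,j) : i, j ≥ 1, r_z(i,j) = 0}`. -/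
def domSet (z : Equiv.Perm ℕ) : Set (ℕ × ℕ) :=
  {p | 1 ≤ p.1 ∧ 1 ≤ p.2 ∧ rnk z p.1 p.2 = 0}

/-- `(p, q)` is an outer corner of `dom(z)`. -/
def IsOuterCorner (z : Equiv.Perm ℕ) (p q : ℕ) : Prop :=
  1 ≤ p ∧ 1 ≤ q ∧ (p, q) ∉ domSet z ∧
    (p = 1 ∨ (p - 1, q) ∈ domSet z) ∧ (q = 1 ∨ (p, q - 1) ∈ domSet z)

/-- `I_n`: involutions in `S_∞` fixing every `i > n`. -/
def InvolIn (n : ℕ) : Set (Equiv.Perm ℕ) :=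
  {w | w 0 = 0 ∧ w * w = 1 ∧ ∀ i, n < i → w i = i}

/-- The fixed points of `z` lying in `[n]`. -/
def fixedPtsIn (n : ℕ) (z : Equiv.Perm ℕ) : Finset ℕ :=
  (Finset.Icc 1 n).filter fun i => z i = i

/-- The function swapping `m + 2t - 1` and `m + 2t` for every `t ≥ 1`, fixing all other points. -/
def tailSwapFun (m : ℕ) : ℕ → ℕ := fun i =>
  if i ≤ m then i else if (i - m) % 2 = 1 then i + 1 else i - 1

theorem tailSwapFun_involutive (m : ℕ) : Function.Involutive (tailSwapFun m) := by
  intro i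
  unfold tailSwapFun
  split_ifs <;> omega

/-- The involution swapping `m + 2t - 1` and `m + 2t` for every `t ≥ 1`. -/
def tailSwap (m : ℕ) : Equiv.Perm ℕ :=
  Function.Involutive.toPerm _ (tailSwapFun_involutive m)

/-- The fixed-point-free standardization `FPF_n(z) = z ⋅ (i_1,n+1)⋯(i_k,n+k) ⋅ c`,
where `i_1 < ⋯ < i_k` are the fixed points of `z` in `[n]` and `c` swaps
`n+k+2t-1, n+k+2t` for all `t ≥ 1`. -/
noncomputable def fpfStd (n : ℕ) (z : Equiv.Perm ℕ) : Equiv.Perm ℕ :=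
  z *
    (List.ofFn fun t : Fin (fixedPtsIn n z).card =>
      Equiv.swap ((fixedPtsIn n z).orderEmbOfFin rfl t) (n + (t : ℕ) + 1)).prod *
    tailSwap (n + (fixedPtsIn n z).card)

/-- `Mat^ss_n(K)`: skew-symmetric `n × n` matrices (transpose is the negative, zero diagonal).
Row/column index `a : Fin n` corresponds to the (1-indexed) row/column `a + 1`. -/
def MatSS (K : Type*) [CommRing K] (n : ℕ) : Set (Matrix (Fin n) (Fin n) K) :=
  {A | A.transpose = -A ∧ ∀ i, A i i = 0}

/-- The skew-symmetric matrix Schubert variety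
`X^ss_z = {A ∈ Mat^ss_n : rank A_{[i][j]} ≤ r_z(i,j) for all i, j ∈ [n]}`. -/
noncomputable def Xss (K : Type*) [Field K] (n : ℕ) (z : Equiv.Perm ℕ) :
    Set (Matrix (Fin n) (Fin n) K) :=
  {A | A ∈ MatSS K n ∧ ∀ (i j : ℕ) (hi : i ≤ n) (hj : j ≤ n), 1 ≤ i → 1 ≤ j →
    (A.submatrix (Fin.castLE hi) (Fin.castLE hj)).rank ≤ rnk z i j}

/-- `#{(i,j) : i > j, j < z(i), i < z(j)}` for a permutation of `Fin N`
(the `0`-indexed version of `ℓ_fpf`). -/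
def ellFpfFin {N : ℕ} (z : Equiv.Perm (Fin N)) : ℕ :=
  (Finset.univ.filter fun p : Fin N × Fin N => p.2 < p.1 ∧ p.2 < z p.1 ∧ p.1 < z p.2).card

/-- The Pfaffian of an `N × N` matrix:
`pf(A) = ∑_{z fpf involution of [N]} (-1)^{ℓ_fpf(z)} ∏_{z(i) < i} A_{z(i), i}`.
(The sum is empty, hence `0`, when `N` is odd.) -/
noncomputable def Pfaffian {R : Type*} [CommRing R] {N : ℕ} (A : Matrix (Fin N) (Fin N) R) : R :=
  ∑ z ∈ Finset.univ.filter (fun z : Equiv.Perm (Fin N) => (∀ i, z i ≠ i) ∧ ∀ i, z (z i) = i),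
    (-1 : R) ^ ellFpfFin z * ∏ i ∈ Finset.univ.filter (fun i : Fin N => z i < i), A (z i) i

/-- Index set for the variables `u_{ij}`, `n ≥ i > j ≥ 1`, of the coordinate ring
`R_n = K[Mat^ss_n]`; the variable `⟨(a, b), _⟩` is `u_{a+1, b+1}`. -/
abbrev SSVar (n : ℕ) : Type := {p : Fin n × Fin n // p.2 < p.1}

/-- The generic skew-symmetric matrix `U^ss` over `R_n`. -/
noncomputable def Uss (K : Type*) [CommRing K] (n : ℕ) :
    Matrix (Fin n) (Fin n) (MvPolynomial (SSVar n) K) :=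
  Matrix.of fun i j =>
    if h : j < i then MvPolynomial.X ⟨(i, j), h⟩
    else if h' : i < j then -MvPolynomial.X ⟨(j, i), h'⟩
    else 0

/-- The ideal of polynomials vanishing on a set `X`, where a point `A` is evaluated
via `ev A : σ → K`. -/
noncomputable def vanishingIdeal {K : Type*} [CommRing K] {σ M : Type*}
    (X : Set M) (ev : M → σ → K) : Ideal (MvPolynomial σ K) where
  carrier := {f | ∀ A ∈ X, MvPolynomial.eval (ev A) f = 0}
  zero_mem' := by simp
  add_mem' := by
    intro f g hf hg
    simp only [Set.mem_setOf_eq] at *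
    intro A hA
    rw [map_add, hf A hA, hg A hA, add_zero]
  smul_mem' := by
    intro c f hf
    simp only [Set.mem_setOf_eq] at *
    intro A hA
    rw [smul_eq_mul, map_mul, hf A hA, mul_zero]

/-- `I(X^ss_z) ⊆ R_n`, where `u_{ij}` is evaluated at `A` as `A_{ij}`. -/
noncomputable def IXss (K : Type*) [Field K] (n : ℕ) (z : Equiv.Perm ℕ) :
    Ideal (MvPolynomial (SSVar n) K) :=
  vanishingIdeal (Xss K n z) fun A v => A v.1.1 v.1.2

/-- `pf(U^ss_{RR})` for a finite row/column set `R` (listed in increasing order). -/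
noncomputable def pfUss (K : Type*) [CommRing K] {n : ℕ} (R : Finset (Fin n)) :
    MvPolynomial (SSVar n) K :=
  Pfaffian ((Uss K n).submatrix (fun s => R.orderEmbOfFin rfl s) fun t => R.orderEmbOfFin rfl t)

/-- The ideal `I^ss_z`, generated by the Pfaffians `pf(U^ss_{RR})` over all nonempty
even-size `R ⊆ [n]` such that `R ⊆ [i]` and `|R ∩ [j]| > r_z(i,j)` for some `i ≥ j`. -/
noncomputable def IssIdeal (K : Type*) [Field K] (n : ℕ) (z : Equiv.Perm ℕ) :
    Ideal (MvPolynomial (SSVar n) K) :=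
  Ideal.span {f : MvPolynomial (SSVar n) K | ∃ R : Finset (Fin n),
    R.Nonempty ∧ Even R.card ∧
    (∃ i j : ℕ, 1 ≤ j ∧ j ≤ i ∧ i ≤ n ∧ (∀ a ∈ R, (a : ℕ) + 1 ≤ i) ∧
      rnk z i j < (R.filter fun a : Fin n => (a : ℕ) + 1 ≤ j).card) ∧
    f = pfUss K R}

/-- The square-free monomial `u^ss_{AB}`: zero if `A ⊙ B` meets the diagonal, and otherwise
the product of the variables `u_{ij}` over the pairs `i > j` with `(i,j)` or `(j,i)` in
`A ⊙ B = {(a_0, b_r), (a_1, b_{r-1}), ..., (a_r, b_0)}`. -/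
noncomputable def ussMon (K : Type*) [CommRing K] {n : ℕ} (A B : Finset (Fin n)) :
    MvPolynomial (SSVar n) K :=
  if h : A.card = B.card then
    if ∃ t : Fin A.card, (A.orderEmbOfFin rfl t : Fin n) = B.orderEmbOfFin h.symm t.rev then 0
    else
      ∏ v ∈ Finset.univ.filter (fun v : SSVar n => ∃ t : Fin A.card,
          (A.orderEmbOfFin rfl t = v.1.1 ∧ B.orderEmbOfFin h.symm t.rev = v.1.2) ∨
          (A.orderEmbOfFin rfl t = v.1.2 ∧ B.orderEmbOfFin h.symm t.rev = v.1.1)),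
        MvPolynomial.X v
  else 0

/-- The monomial ideal `J^ss_r` of a symmetric rank table `r`, generated by the monomials
`u^ss_{AB}` with `A ⊆ [i]`, `B ⊆ [j]`, `|A| = |B| = r(i,j) + 1` for some `n ≥ i ≥ j ≥ 1`. -/
noncomputable def JssIdealOfTable (K : Type*) [CommRing K] (n : ℕ) (r : ℕ → ℕ → ℕ) :
    Ideal (MvPolynomial (SSVar n) K) :=
  Ideal.span {g : MvPolynomial (SSVar n) K | ∃ (i j : ℕ) (A B : Finset (Fin n)),
    1 ≤ j ∧ j ≤ i ∧ i ≤ n ∧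
    (∀ a ∈ A, (a : ℕ) + 1 ≤ i) ∧ (∀ b ∈ B, (b : ℕ) + 1 ≤ j) ∧
    A.card = r i j + 1 ∧ B.card = r i j + 1 ∧ g = ussMon K A B}

/-- `J^ss_z = J^ss_{r_z}`. -/
noncomputable def JssIdeal (K : Type*) [CommRing K] (n : ℕ) (z : Equiv.Perm ℕ) :
    Ideal (MvPolynomial (SSVar n) K) :=
  JssIdealOfTable K n (rnk z)

/-- Total degree of a monomial (exponent vector). -/
def totalDeg {σ : Type*} (m : σ →₀ ℕ) : ℕ := m.sum fun _ e => e

/-- The lexicographic order on the variables `u_{ij}` by the pair `(i, j)`. -/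
def varLT {n : ℕ} (v w : SSVar n) : Prop :=
  v.1.1 < w.1.1 ∨ (v.1.1 = w.1.1 ∧ v.1.2 < w.1.2)

/-- The (graded) reverse lexicographic term order on monomials of `R_n`:
`m₁ < m₂` iff `deg m₁ < deg m₂`, or the degrees agree and the lexicographically largest
variable with different exponents has strictly larger exponent in `m₁`. -/
def revlexLT {n : ℕ} (m₁ m₂ : SSVar n →₀ ℕ) : Prop :=
  totalDeg m₁ < totalDeg m₂ ∨
    (totalDeg m₁ = totalDeg m₂ ∧ ∃ v, m₂ v < m₁ v ∧ ∀ w, varLT v w → m₁ w = m₂ w)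

/-- The initial ideal of `I` with respect to a strict term order `lt`: the ideal
generated by the leading monomials `init(f)` of the nonzero `f ∈ I`. -/
noncomputable def initIdeal {K : Type*} [CommRing K] {σ : Type*}
    (lt : (σ →₀ ℕ) → (σ →₀ ℕ) → Prop) (I : Ideal (MvPolynomial σ K)) :
    Ideal (MvPolynomial σ K) :=
  Ideal.span {g : MvPolynomial σ K | ∃ f ∈ I, f ≠ 0 ∧ ∃ m : σ →₀ ℕ, m ∈ f.support ∧
    (∀ m' ∈ f.support, m' ≠ m → lt m' m) ∧ g = MvPolynomial.monomial m (1 : K)}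

/-- A term order on the monomials of a polynomial ring: a linear order in which `1` is
the unique minimum and multiplication by a fixed monomial preserves order. -/
structure TermOrder (σ : Type*) where
  le : (σ →₀ ℕ) → (σ →₀ ℕ) → Prop
  trans : ∀ a b c, le a b → le b c → le a c
  antisymm : ∀ a b, le a b → le b a → a = b
  total : ∀ a b, le a b ∨ le b a
  zero_le : ∀ a, le 0 a
  add_le_add_right : ∀ a b c, le a b → le (a + c) (b + c)

/-- The initial ideal of `I` with respect to a term order `τ`. -/
noncomputable def initIdealLe {K : Type*} [CommRing K] {σ : Type*}
    (τ : TermOrder σ) (I : Ideal (MvPolynomial σ K)) : Ideal (MvPolynomial σ K) :=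
  Ideal.span {g : MvPolynomial σ K | ∃ f ∈ I, f ≠ 0 ∧ ∃ m : σ →₀ ℕ, m ∈ f.support ∧
    (∀ m' ∈ f.support, τ.le m' m) ∧ g = MvPolynomial.monomial m (1 : K)}

/-- An ideal is homogeneous (w.r.t. total degree) iff it contains all homogeneous
components of its elements. -/
def IsHomogIdeal {K : Type*} [CommSemiring K] {σ : Type*}
    (I : Ideal (MvPolynomial σ K)) : Prop :=
  ∀ f ∈ I, ∀ d : ℕ, MvPolynomial.homogeneousComponent d f ∈ I

/-- The reading order on boxes: rows top to bottom, each row right to left. -/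
def pdRel (p q : ℕ × ℕ) : Prop := p.1 < q.1 ∨ (p.1 = q.1 ∧ q.2 ≤ p.2)

instance : DecidableRel pdRel := fun p q => by unfold pdRel; infer_instance

instance : IsTrans (ℕ × ℕ) pdRel :=
  ⟨fun a b c hab hbc => by unfold pdRel at *; omega⟩

instance : IsAntisymm (ℕ × ℕ) pdRel :=
  ⟨fun a b hab hba => by
    unfold pdRel at hab hba
    exact Prod.ext_iff.mpr ⟨by omega, by omega⟩⟩

instance : IsTotal (ℕ × ℕ) pdRel :=
  ⟨fun a b => by unfold pdRel; omega⟩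

/-- The pipe dream reading word of a finite set `D` of boxes: the letters `i + j - 1`
over `(i, j) ∈ D`, in the order making `(i, -j)` increase lexicographically. -/
def pdWord (D : Finset (ℕ × ℕ)) : List ℕ :=
  (D.sort pdRel).map fun p => p.1 + p.2 - 1

/-- The product `s_{i_1} s_{i_2} ⋯ s_{i_l}` of simple transpositions. -/
def wordProd (l : List ℕ) : Equiv.Perm ℕ :=
  (l.map fun i => Equiv.swap i (i + 1)).prod

/-- `l` is a reduced word for `w`: a minimal-length word of positive letters whose
product of simple transpositions is `w`. -/
def IsReducedWordOf (w : Equiv.Perm ℕ) (l : List ℕ) : Prop :=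
  (∀ a ∈ l, 1 ≤ a) ∧ wordProd l = w ∧
    ∀ l' : List ℕ, (∀ a ∈ l', 1 ≤ a) → wordProd l' = w → l.length ≤ l'.length

/-- The set `RP(w)` of reduced pipe dreams for `w`. -/
def RP (w : Equiv.Perm ℕ) : Set (Finset (ℕ × ℕ)) :=
  {D | (∀ p ∈ D, 1 ≤ p.1 ∧ 1 ≤ p.2) ∧ IsReducedWordOf w (pdWord D)}

/-- `I^FPF_m`: involutions in `S_∞` that are fixed-point-free on `[m]` and fix
all `i > m`. -/
def IFPFm (m : ℕ) : Set (Equiv.Perm ℕ) :=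
  {y | y 0 = 0 ∧ y * y = 1 ∧ (∀ i, 1 ≤ i → i ≤ m → y i ≠ i) ∧ ∀ i, m < i → y i = i}

/-- `z = FPF_m(y)`: `z` agrees with `y` on `[m]` and swaps `m + 2k - 1, m + 2k`
for all `k ≥ 1`. -/
def IsFPFStdOf (m : ℕ) (y z : Equiv.Perm ℕ) : Prop :=
  (∀ i, i ≤ m → z i = y i) ∧
    ∀ k : ℕ, z (m + 2 * k + 1) = m + 2 * k + 2 ∧ z (m + 2 * k + 2) = m + 2 * k + 1

/-- The set `FP(z)` of fpf-involution pipe dreams for `z ∈ I^FPF_∞`. -/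
def FP (z : Equiv.Perm ℕ) : Set (Finset (ℕ × ℕ)) :=
  {E | ∃ (m : ℕ) (y : Equiv.Perm ℕ) (D : Finset (ℕ × ℕ)), Even m ∧ y ∈ IFPFm m ∧
    IsFPFStdOf m y z ∧ D ∈ RP y ∧ D.image Prod.swap = D ∧
    E = D.filter fun p => p.2 < p.1}

/-- The minor `det(U_{AB})` of the generic `m × n` matrix `U`, with rows `A` and
columns `B` listed in increasing order. -/
noncomputable def genMinor (K : Type*) [CommRing K] {m n : ℕ}
    (A : Finset (Fin m)) (B : Finset (Fin n)) (h : A.card = B.card) :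
    MvPolynomial (Fin m × Fin n) K :=
  (Matrix.of fun s t : Fin A.card =>
    (MvPolynomial.X (A.orderEmbOfFin rfl s, B.orderEmbOfFin h.symm t) :
      MvPolynomial (Fin m × Fin n) K)).det

/-- The antidiagonal monomial `u_{AB} = ∏_{(a,b) ∈ A ⊙ B} u_{ab}`. -/
noncomputable def genMon (K : Type*) [CommRing K] {m n : ℕ}
    (A : Finset (Fin m)) (B : Finset (Fin n)) (h : A.card = B.card) :
    MvPolynomial (Fin m × Fin n) K :=
  ∏ t : Fin A.card, MvPolynomial.X (A.orderEmbOfFin rfl t, B.orderEmbOfFin h.symm t.rev)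

/-- The exponent vector of the antidiagonal monomial `u_{AB}`. -/
noncomputable def antidiagExp {m n : ℕ} (A : Finset (Fin m)) (B : Finset (Fin n))
    (h : A.card = B.card) : (Fin m × Fin n) →₀ ℕ :=
  ∑ t : Fin A.card, Finsupp.single (A.orderEmbOfFin rfl t, B.orderEmbOfFin h.symm t.rev) 1

/-- The ideal `I_w`, generated by the minors `det(U_{AB})` with `A ⊆ [i]`, `B ⊆ [j]`,
`|A| = |B| = r_w(i,j) + 1` for some `(i,j) ∈ [m] × [n]`. -/
noncomputable def IwIdeal (K : Type*) [Field K] (m n : ℕ) (w : Equiv.Perm ℕ) :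
    Ideal (MvPolynomial (Fin m × Fin n) K) :=
  Ideal.span {g : MvPolynomial (Fin m × Fin n) K |
    ∃ (i j : ℕ) (A : Finset (Fin m)) (B : Finset (Fin n)) (h : A.card = B.card),
      1 ≤ i ∧ i ≤ m ∧ 1 ≤ j ∧ j ≤ n ∧ (∀ a ∈ A, (a : ℕ) + 1 ≤ i) ∧
      (∀ b ∈ B, (b : ℕ) + 1 ≤ j) ∧ A.card = rnk w i j + 1 ∧ g = genMinor K A B h}

/-- The monomial ideal `J_w`, generated by the monomials `u_{AB}` with `A ⊆ [i]`,
`B ⊆ [j]`, `|A| = |B| = r_w(i,j) + 1` for some `(i,j) ∈ [m] × [n]`. -/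
noncomputable def JwIdeal (K : Type*) [Field K] (m n : ℕ) (w : Equiv.Perm ℕ) :
    Ideal (MvPolynomial (Fin m × Fin n) K) :=
  Ideal.span {g : MvPolynomial (Fin m × Fin n) K |
    ∃ (i j : ℕ) (A : Finset (Fin m)) (B : Finset (Fin n)) (h : A.card = B.card),
      1 ≤ i ∧ i ≤ m ∧ 1 ≤ j ∧ j ≤ n ∧ (∀ a ∈ A, (a : ℕ) + 1 ≤ i) ∧
      (∀ b ∈ B, (b : ℕ) + 1 ≤ j) ∧ A.card = rnk w i j + 1 ∧ g = genMon K A B h}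

/-- The matrix Schubert variety
`X_w = {A ∈ Mat_{m×n} : rank A_{[i][j]} ≤ r_w(i,j) for all (i,j) ∈ [m] × [n]}`. -/
noncomputable def Xw (K : Type*) [Field K] (m n : ℕ) (w : Equiv.Perm ℕ) :
    Set (Matrix (Fin m) (Fin n) K) :=
  {A | ∀ (i j : ℕ) (hi : i ≤ m) (hj : j ≤ n), 1 ≤ i → 1 ≤ j →
    (A.submatrix (Fin.castLE hi) (Fin.castLE hj)).rank ≤ rnk w i j}

/-- `I(X_w)`: the ideal of polynomials vanishing on `X_w`. -/
noncomputable def IXw (K : Type*) [Field K] (m n : ℕ) (w : Equiv.Perm ℕ) :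
    Ideal (MvPolynomial (Fin m × Fin n) K) :=
  vanishingIdeal (Xw K m n w) fun A v => A v.1 v.2

/-- The variable `u_{pq}` (with `1 ≤ q < p ≤ n`) of `R_n`. -/
def ssvar {n : ℕ} (p q : ℕ) (hp : p ≤ n) (hq : 1 ≤ q) (hqp : q < p) : SSVar n :=
  ⟨(⟨p - 1, by omega⟩, ⟨q - 1, by omega⟩), Fin.mk_lt_mk.mpr (by omega)⟩

/-- Index set for the variables `u_{ij}`, `i > j ≥ 1`, over all positive integers. -/
abbrev PVar : Type := {p : ℕ × ℕ // 1 ≤ p.2 ∧ p.2 < p.1}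

/-- The generic skew-symmetric array `U^ss` over the positive integers:
`u_{xy}` if `x > y`, `-u_{yx}` if `x < y`, `0` if `x = y`. -/
noncomputable def UssP (K : Type*) [CommRing K] (x y : ℕ) : MvPolynomial PVar K :=
  if h : 1 ≤ y ∧ y < x then MvPolynomial.X ⟨(x, y), h⟩
  else if h' : 1 ≤ x ∧ x < y then -MvPolynomial.X ⟨(y, x), h'⟩
  else 0

/-- `pf(U^ss_{RR})` for a finite set `R` of positive integers. -/
noncomputable def pfUssP (K : Type*) [CommRing K] (R : Finset ℕ) : MvPolynomial PVar K :=
  Pfaffian (Matrix.of fun s t : Fin R.card =>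
    UssP K (R.orderEmbOfFin rfl s) (R.orderEmbOfFin rfl t))

/-- `g_{AB}`: the Pfaffian of the `(|B|+|A|) × (|B|+|A|)` skew-symmetric matrix whose
rows and columns are labeled by `B` (increasing) followed by `A` (increasing), with
entry `U^ss_{xy}` at a position labeled `(x, y)`, except that the entry is `0` when
both labels come from the `A`-block. -/
noncomputable def gAB (K : Type*) [CommRing K] (A B : Finset ℕ) : MvPolynomial PVar K :=
  Pfaffian ((Matrix.of fun p q : Fin B.card ⊕ Fin A.card =>
      match p, q with
      | Sum.inl s, Sum.inl t => UssP K (B.orderEmbOfFin rfl s) (B.orderEmbOfFin rfl t)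
      | Sum.inl s, Sum.inr t => UssP K (B.orderEmbOfFin rfl s) (A.orderEmbOfFin rfl t)
      | Sum.inr s, Sum.inl t => UssP K (A.orderEmbOfFin rfl s) (B.orderEmbOfFin rfl t)
      | Sum.inr _, Sum.inr _ => (0 : MvPolynomial PVar K)).submatrix
    finSumFinEquiv.symm finSumFinEquiv.symm)

/-- The exponent of the sign `⟨T, S⟩ = (-1)^{|S||T| + C(|S|,2) + ∑ of the (1-indexed)
positions in the increasing enumeration of `T` occupied by elements of `S`}`. -/
def setSgnExp (T S : Finset ℕ) : ℕ :=
  S.card * T.card + Nat.choose S.card 2 +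
    ∑ t : Fin T.card, if T.orderEmbOfFin rfl t ∈ S then (t : ℕ) + 1 else 0



section LA
open Module

theorem finrank_congr {K V : Type*} [Field K] [AddCommGroup V] [Module K V]
    {S T : Submodule K V} (h : S = T) : finrank K S = finrank K T := by rw [h]

theorem mrank_neg {K : Type*} [Field K] {m n : ℕ} (M : Matrix (Fin m) (Fin n) K) :
    (-M).rank = M.rank := by
  rw [Matrix.rank, Matrix.rank]
  apply finrank_congr
  rw [← LinearMap.range_neg]
  congr 1
  ext
  simp

theorem mrank_eq_zero {K : Type*} [Field K] {m n : ℕ} (M : Matrix (Fin m) (Fin n) K) :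
    M.rank = 0 ↔ M = 0 := by
  constructor
  · intro h
    rw [Matrix.rank, Submodule.finrank_eq_zero, LinearMap.range_eq_bot] at h
    ext i j
    have := congrFun (congrArg (fun f => f (Pi.single j 1)) h) i
    simpa using this
  · rintro rfl
    simp

theorem finrank_le_inf_ker {K V : Type*} [Field K] [AddCommGroup V] [Module K V]
    [FiniteDimensional K V] (W : Submodule K V) (f : V →ₗ[K] K) :
    finrank K W ≤ finrank K (W ⊓ LinearMap.ker f : Submodule K V) + 1 := by
  have h1 := LinearMap.finrank_range_add_finrank_ker (f.domRestrict W)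
  have h2 : finrank K (LinearMap.range (f.domRestrict W)) ≤ 1 := by
    have := Submodule.finrank_le (LinearMap.range (f.domRestrict W))
    simpa using this
  have h3 : finrank K (LinearMap.ker (f.domRestrict W)) =
      finrank K (W ⊓ LinearMap.ker f : Submodule K V) := by
    rw [← Submodule.finrank_map_subtype_eq]
    apply finrank_congr
    ext x
    simp [LinearMap.mem_ker, and_comm]
  omega

theorem even_alt {K V : Type*} [Field K] [AddCommGroup V] [Module K V]
    [FiniteDimensional K V] (B : V →ₗ[K] V →ₗ[K] K) (hB : ∀ x, B x x = 0) (m : ℕ) :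
    ∀ (W T : Submodule K V), finrank K W = m →
      (∀ v, v ∈ T ↔ v ∈ W ∧ ∀ w ∈ W, B w v = 0) →
      ∃ k, finrank K W = finrank K T + 2 * k := by
  have hsk : ∀ x y, B x y = - B y x := by
    intro x y
    have := hB (x + y)
    simp only [map_add, LinearMap.add_apply, hB] at this
    linear_combination this
  induction m using Nat.strong_induction_on with
  | _ m ih =>
  intro W T hm hT
  by_cases h0 : ∀ x ∈ W, ∀ y ∈ W, B x y = 0
  · have : T = W := by
      ext v
      rw [hT]
      exact ⟨fun h => h.1, fun h => ⟨h, fun w hw => h0 w hw v h⟩⟩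
    exact ⟨0, by rw [this]; ring⟩
  · push Not at h0
    obtain ⟨x, hx, y, hy, hxy⟩ := h0
    let f : V →ₗ[K] K × K := (B x).prod (B y)
    let W' : Submodule K V := W ⊓ LinearMap.ker f
    have hW' : ∀ v, v ∈ W' ↔ v ∈ W ∧ B x v = 0 ∧ B y v = 0 := by
      intro v
      simp [W', f]
    have h1 := LinearMap.finrank_range_add_finrank_ker (f.domRestrict W)
    have h3 : finrank K (LinearMap.ker (f.domRestrict W)) = finrank K W' := by
      rw [← Submodule.finrank_map_subtype_eq]
      apply finrank_congr
      ext x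
      simp [LinearMap.mem_ker, W', and_comm]
    have h2 : LinearMap.range (f.domRestrict W) = ⊤ := by
      rw [LinearMap.range_eq_top]
      rintro ⟨a, b⟩
      refine ⟨⟨(a / B x y) • y - (b / B x y) • x,
        W.sub_mem (W.smul_mem _ hy) (W.smul_mem _ hx)⟩, ?_⟩
      have : B y x ≠ 0 := by rw [hsk]; simpa using hxy
      simp [f, hB, hsk y x]
      constructor <;> field_simp
    rw [h2, finrank_top, Module.finrank_prod, Module.finrank_self, h3] at h1
    have hT' : ∀ v, v ∈ T ↔ v ∈ W' ∧ ∀ w ∈ W', B w v = 0 := by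
      intro v
      rw [hT]
      constructor
      · rintro ⟨h, h'⟩
        exact ⟨(hW' v).2 ⟨h, h' x hx, h' y hy⟩, fun w hw => h' w ((hW' w).1 hw).1⟩
      · rintro ⟨h, h'⟩
        obtain ⟨ha, hb, hc⟩ := (hW' v).1 h
        refine ⟨ha, fun w hw => ?_⟩
        have := h' (w - ((B x w / B x y) • y - (B y w / B x y) • x)) ((hW' _).2 ⟨?_, ?_, ?_⟩)
        · simpa [hb, hc] using this
        · exact W.sub_mem hw (W.sub_mem (W.smul_mem _ hy) (W.smul_mem _ hx))
        · simp [hB]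
          field_simp
          simp
        · simp [hB, hsk y x]
          field_simp
          simp
    obtain ⟨k, hk⟩ := ih (finrank K W') (by omega) W' T rfl hT'
    exact ⟨k + 1, by omega⟩

theorem even_rank {K : Type*} [Field K] {a : ℕ} (M : Matrix (Fin a) (Fin a) K)
    (h1 : M.transpose = -M) (h2 : ∀ i, M i i = 0) : Even M.rank := by
  have hsk : ∀ i j, M i j = - M j i := fun i j => by
    have := congrFun (congrFun h1 j) i
    simpa using this
  obtain ⟨k, hk⟩ := even_alt (Matrix.toLinearMap₂' K M) (by
    intro x
    rw [Matrix.toLinearMap₂'_apply]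
    simp only [smul_eq_mul]
    rw [← Finset.sum_product']
    apply Finset.sum_involution (fun p _ => (p.2, p.1))
    · rintro ⟨i, j⟩ _
      simp
      rw [hsk j i]; ring
    · rintro ⟨i, j⟩ _ hne heq
      simp at heq
      apply hne
      obtain ⟨rfl, _⟩ := heq
      simp [h2]
    · simp
    · simp) _ ⊤ (LinearMap.ker M.mulVecLin) rfl (by
    intro v
    simp only [LinearMap.mem_ker, Matrix.mulVecLin_apply, Submodule.mem_top, true_and, true_imp_iff,
      Matrix.toLinearMap₂'_apply']
    constructor
    · intro h w; simp [h]
    · intro h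
      ext i
      have := h (Pi.single i 1)
      simpa using this)
  have := LinearMap.finrank_range_add_finrank_ker M.mulVecLin
  rw [finrank_top] at hk
  rw [Matrix.rank]
  exact ⟨k, by omega⟩

/-- span of the first `j` columns -/
def Csp {K : Type*} [Field K] {n : ℕ} (A : Matrix (Fin n) (Fin n) K) (j : ℕ) :
    Submodule K (Fin n → K) :=
  Submodule.span K {v | ∃ k : Fin n, (k : ℕ) < j ∧ v = fun i => A i k}

/-- vectors vanishing in the first `i` coordinates -/
def Fsp (K : Type*) [Field K] (n : ℕ) (i : ℕ) : Submodule K (Fin n → K) where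
  carrier := {v | ∀ k : Fin n, (k : ℕ) < i → v k = 0}
  zero_mem' := by simp
  add_mem' := by
    intro a b ha hb k hk
    simp [ha k hk, hb k hk]
  smul_mem' := by
    intro c a ha k hk
    simp [ha k hk]

/-- rank function -/
noncomputable def RA {K : Type*} [Field K] {n : ℕ} (A : Matrix (Fin n) (Fin n) K) (i j : ℕ) : ℕ :=
  finrank K (Csp A j) - finrank K (Csp A j ⊓ Fsp K n i : Submodule K (Fin n → K))

theorem RA_add {K : Type*} [Field K] {n : ℕ} (A : Matrix (Fin n) (Fin n) K) (i j : ℕ) :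
    RA A i j + finrank K (Csp A j ⊓ Fsp K n i : Submodule K (Fin n → K)) = finrank K (Csp A j) := by
  have := Submodule.finrank_mono (inf_le_left : Csp A j ⊓ Fsp K n i ≤ Csp A j)
  unfold RA
  omega

theorem rank_eq_RA {K : Type*} [Field K] {n : ℕ} (A : Matrix (Fin n) (Fin n) K) (i j : ℕ)
    (hi : i ≤ n) (hj : j ≤ n) :
    (A.submatrix (Fin.castLE hi) (Fin.castLE hj)).rank = RA A i j := by
  have h1 := RA_add A i j
  let π : (Fin n → K) →ₗ[K] (Fin i → K) := LinearMap.funLeft K K (Fin.castLE hi)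
  have h2 : (A.submatrix (Fin.castLE hi) (Fin.castLE hj)).rank =
      finrank K (Submodule.map π (Csp A j)) := by
    rw [Matrix.rank_eq_finrank_span_cols]
    apply finrank_congr
    rw [Csp, Submodule.map_span]
    congr 1
    ext v
    constructor
    · rintro ⟨k, rfl⟩
      refine ⟨_, ⟨Fin.castLE hj k, by simp, rfl⟩, ?_⟩
      ext x
      simp [π, LinearMap.funLeft]
    · rintro ⟨_, ⟨k, hk, rfl⟩, rfl⟩
      refine ⟨⟨k, hk⟩, ?_⟩
      ext x
      simp [π, LinearMap.funLeft]
  have h3 := LinearMap.finrank_range_add_finrank_ker (π.domRestrict (Csp A j))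
  have h4 : finrank K (LinearMap.ker (π.domRestrict (Csp A j))) =
      finrank K (Csp A j ⊓ Fsp K n i : Submodule K (Fin n → K)) := by
    rw [← Submodule.finrank_map_subtype_eq]
    apply finrank_congr
    ext x
    simp only [Submodule.mem_map, LinearMap.mem_ker, Submodule.mem_inf]
    have : π x = 0 ↔ x ∈ Fsp K n i := by
      constructor
      · intro h k hk
        exact congrFun h ⟨k, hk⟩
      · intro h
        ext k
        exact h (Fin.castLE hi k) (by simp)
    simp [this, and_comm]
  rw [LinearMap.range_domRestrict] at h3
  omega

theorem RA_super {K : Type*} [Field K] {n : ℕ} (A : Matrix (Fin n) (Fin n) K) {a a' b b' : ℕ}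
    (ha : a ≤ a') (hb : b' ≤ b) : RA A a b + RA A a' b' ≤ RA A a' b + RA A a b' := by
  have h1 := RA_add A a b
  have h2 := RA_add A a' b'
  have h3 := RA_add A a' b
  have h4 := RA_add A a b'
  have hF : Fsp K n a' ≤ Fsp K n a := fun v hv k hk => hv k (by omega)
  have hC : Csp A b' ≤ Csp A b := by
    apply Submodule.span_mono
    rintro v ⟨k, hk, rfl⟩
    exact ⟨k, by omega, rfl⟩
  have h5 := Submodule.finrank_sup_add_finrank_inf_eq (Csp A b' ⊓ Fsp K n a) (Csp A b ⊓ Fsp K n a')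
  have h6 : (Csp A b' ⊓ Fsp K n a) ⊓ (Csp A b ⊓ Fsp K n a') = Csp A b' ⊓ Fsp K n a' := by
    ext v
    simp only [Submodule.mem_inf]
    constructor
    · tauto
    · rintro ⟨h, h'⟩
      exact ⟨⟨h, hF h'⟩, hC h, h'⟩
  have h7 : (Csp A b' ⊓ Fsp K n a) ⊔ (Csp A b ⊓ Fsp K n a') ≤ Csp A b ⊓ Fsp K n a :=
    sup_le (inf_le_inf hC le_rfl) (inf_le_inf le_rfl hF)
  have h8 := Submodule.finrank_mono h7
  rw [h6] at h5
  omega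

theorem RA_rows {K : Type*} [Field K] {n : ℕ} (A : Matrix (Fin n) (Fin n) K) (p b d : ℕ) :
    RA A (p + d) b ≤ RA A p b + d := by
  induction d with
  | zero => simp
  | succ d ih =>
    have h1 := RA_add A (p + d) b
    have h2 := RA_add A (p + (d + 1)) b
    have key : finrank K (Csp A b ⊓ Fsp K n (p + d) : Submodule K (Fin n → K)) ≤
        finrank K (Csp A b ⊓ Fsp K n (p + (d + 1)) : Submodule K (Fin n → K)) + 1 := by
      by_cases h : p + d < n
      · have := finrank_le_inf_ker (Csp A b ⊓ Fsp K n (p + d)) (LinearMap.proj ⟨p + d, h⟩)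
        have he : (Csp A b ⊓ Fsp K n (p + d)) ⊓ LinearMap.ker (LinearMap.proj ⟨p + d, h⟩) ≤
            Csp A b ⊓ Fsp K n (p + (d + 1)) := by
          rintro v ⟨⟨h1, h2⟩, h3⟩
          refine ⟨h1, fun k hk => ?_⟩
          by_cases hk' : (k : ℕ) < p + d
          · exact h2 k hk'
          · have : k = ⟨p + d, h⟩ := by
              apply Fin.ext
              simp only
              omega
            rw [this]
            exact h3
        have := Submodule.finrank_mono he
        omega
      · have he : Csp A b ⊓ Fsp K n (p + d) ≤ Csp A b ⊓ Fsp K n (p + (d + 1)) := by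
          rintro v ⟨h1, h2⟩
          exact ⟨h1, fun k hk => h2 k (by omega)⟩
        have := Submodule.finrank_mono he
        omega
    omega

theorem RA_symm {K : Type*} [Field K] {n : ℕ} (A : Matrix (Fin n) (Fin n) K)
    (h1 : A.transpose = -A) {i j : ℕ} (hi : i ≤ n) (hj : j ≤ n) : RA A i j = RA A j i := by
  rw [← rank_eq_RA A i j hi hj, ← rank_eq_RA A j i hj hi, ← Matrix.rank_transpose,
    Matrix.transpose_submatrix, h1, ← mrank_neg]
  congr 1
  ext a b
  simp

theorem RA_even {K : Type*} [Field K] {n : ℕ} (A : Matrix (Fin n) (Fin n) K)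
    (h1 : A.transpose = -A) (h2 : ∀ i, A i i = 0) {i : ℕ} (hi : i ≤ n) : Even (RA A i i) := by
  rw [← rank_eq_RA A i i hi hi]
  apply even_rank
  · rw [Matrix.transpose_submatrix, h1, Matrix.submatrix_neg]; rfl
  · intro k; exact h2 _

theorem RA_zero {K : Type*} [Field K] {n : ℕ} (A : Matrix (Fin n) (Fin n) K) {i j : ℕ}
    (hi : i ≤ n) (hj : j ≤ n) :
    RA A i j = 0 ↔ ∀ a b : Fin n, (a : ℕ) < i → (b : ℕ) < j → A a b = 0 := by
  rw [← rank_eq_RA A i j hi hj, mrank_eq_zero]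
  constructor
  · intro h a b ha hb
    exact congrFun (congrFun h ⟨a, ha⟩) ⟨b, hb⟩
  · intro h
    ext a b
    exact h _ _ (by simp) (by simp)
end LA


/-! ### rank tables -/

theorem rnk_eq_sum (w : Equiv.Perm ℕ) (hw0 : w 0 = 0) (i j N : ℕ) (hN : i ≤ N) :
    rnk w i j = ∑ x ∈ Finset.Icc 1 N, if x ≤ i ∧ w x ≤ j then 1 else 0 := by
  rw [rnk, ← Finset.sum_filter, Finset.sum_const, smul_eq_mul, mul_one]
  congr 1
  ext x
  have : 1 ≤ x → 1 ≤ w x := by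
    intro hx
    by_contra h
    have h1 : w x = w 0 := by omega
    have := w.injective h1
    omega
  simp only [Finset.mem_filter, Finset.mem_Icc]
  constructor
  · rintro ⟨⟨h1, h2⟩, h3, h4⟩; exact ⟨⟨h1, by omega⟩, h2, h4⟩
  · rintro ⟨⟨h1, h2⟩, h3, h4⟩; exact ⟨⟨h1, h3⟩, this h1, h4⟩

theorem rnk_symm (z : Equiv.Perm ℕ) (hinv : ∀ i, z (z i) = i) (i j : ℕ) :
    rnk z i j = rnk z j i := by
  rw [rnk, rnk]
  refine Finset.card_bij' (fun a _ => z a) (fun a _ => z a) ?_ ?_ ?_ ?_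
  all_goals simp only [Finset.mem_filter, hinv]; tauto

theorem rnk_even (z : Equiv.Perm ℕ) (hinv : ∀ i, z (z i) = i) (hf : ∀ i, 1 ≤ i → z i ≠ i)
    (i : ℕ) : Even (rnk z i i) := by
  rw [rnk, ← ZMod.natCast_eq_zero_iff_even, Finset.card_eq_sum_ones, Nat.cast_sum]
  apply Finset.sum_involution (fun a _ => z a)
  · intro a _
    simp
    decide
  · intro a ha _
    simp only [Finset.mem_filter, Finset.mem_Icc] at ha
    exact hf a ha.1.1
  · intro a ha
    simp only [Finset.mem_filter, hinv] at *
    tauto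
  · intro a _; exact hinv a

theorem rnk_diff (z : Equiv.Perm ℕ) (hz0 : z 0 = 0) (p d b : ℕ) :
    rnk z (p + d) b = rnk z p b + ∑ x ∈ Finset.Icc (p + 1) (p + d), if z x ≤ b then 1 else 0 := by
  induction d with
  | zero => simp
  | succ d ih =>
    rw [← add_assoc, Finset.sum_Icc_succ_top (by omega), ← add_assoc, ← ih,
      rnk_eq_sum z hz0 (p + d) b (p + d) le_rfl,
      rnk_eq_sum z hz0 (p + d + 1) b (p + d + 1) le_rfl, Finset.sum_Icc_succ_top (by omega)]
    congr 1
    · apply Finset.sum_congr rfl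
      intro x hx
      rw [Finset.mem_Icc] at hx
      congr 1
      apply propext
      constructor <;> rintro ⟨h1, h2⟩ <;> exact ⟨by omega, h2⟩
    · simp

theorem rnk_rows (z : Equiv.Perm ℕ) (hz0 : z 0 = 0) (p d b : ℕ)
    (h : ∀ x, p < x → x ≤ p + d → z x ≤ b) : rnk z (p + d) b = rnk z p b + d := by
  rw [rnk_diff z hz0, Finset.sum_congr rfl (g := fun _ => 1)]
  · simp
  · intro x hx
    rw [Finset.mem_Icc] at hx
    rw [if_pos (h x (by omega) hx.2)]

theorem rnk_rect (z : Equiv.Perm ℕ) (hz0 : z 0 = 0) {a a' b b' : ℕ} (ha : a ≤ a') (hb : b' ≤ b)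
    (h : ∀ x, a < x → x ≤ a' → b' < z x → z x ≤ b → False) :
    rnk z a b + rnk z a' b' = rnk z a' b + rnk z a b' := by
  obtain ⟨d, rfl⟩ := Nat.exists_eq_add_of_le ha
  rw [rnk_diff z hz0, rnk_diff z hz0 a d b]
  have : ∑ x ∈ Finset.Icc (a + 1) (a + d), (if z x ≤ b then 1 else 0) =
      ∑ x ∈ Finset.Icc (a + 1) (a + d), if z x ≤ b' then 1 else 0 := by
    apply Finset.sum_congr rfl
    intro x hx
    rw [Finset.mem_Icc] at hx
    have : ¬ (b' < z x ∧ z x ≤ b) := fun hh => h x (by omega) hx.2 hh.1 hh.2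
    split_ifs <;> first | rfl | omega
  omega

theorem conj_apply (z : Equiv.Perm ℕ) (hinv : ∀ i, z (z i) = i) {p q r s : ℕ}
    (hp : z p = q) (hr : z r = s) (hqp : q < p) (hpr : p < r) (hsr : s ≠ r) (hsp : s ≠ p) :
    let v := Equiv.swap p r * z * Equiv.swap p r
    v p = s ∧ v s = p ∧ v q = r ∧ v r = q ∧
      ∀ x, x ≠ p → x ≠ q → x ≠ r → x ≠ s → v x = z x := by
  intro v
  have hq : z q = p := by rw [← hp, hinv]
  have hs : z s = r := by rw [← hr, hinv]
  refine ⟨?_, ?_, ?_, ?_, ?_⟩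
  · simp [v, hr, Equiv.swap_apply_of_ne_of_ne hsp hsr]
  · simp [v, hs, Equiv.swap_apply_of_ne_of_ne hsp hsr]
  · simp [v, hq, Equiv.swap_apply_of_ne_of_ne (show q ≠ p by omega) (show q ≠ r by omega)]
  · simp [v, hp, Equiv.swap_apply_of_ne_of_ne (show q ≠ p by omega) (show q ≠ r by omega)]
  · intro x h1 h2 h3 h4
    have e1 : z x ≠ p := fun h => h2 (by rw [← hp, ← h, hinv])
    have e2 : z x ≠ r := fun h => h4 (by rw [← hr, ← h, hinv])
    simp [v, Equiv.swap_apply_of_ne_of_ne h1 h3, Equiv.swap_apply_of_ne_of_ne e1 e2]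

theorem sum_four (S : Finset ℕ) (p q r s : ℕ) (hp : p ∈ S) (hq : q ∈ S) (hr : r ∈ S) (hs : s ∈ S)
    (h1 : p ≠ q) (h2 : p ≠ r) (h3 : p ≠ s) (h4 : q ≠ r) (h5 : q ≠ s) (h6 : r ≠ s) (f : ℕ → ℕ) :
    ∑ x ∈ S, f x = f p + f q + f r + f s +
      ∑ x ∈ (((S.erase p).erase q).erase r).erase s, f x := by
  rw [← Finset.add_sum_erase S f hp, ← Finset.add_sum_erase (S.erase p) f (a := q),
    ← Finset.add_sum_erase ((S.erase p).erase q) f (a := r),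
    ← Finset.add_sum_erase (((S.erase p).erase q).erase r) f (a := s)]
  · ring
  all_goals simp only [Finset.mem_erase]; grind

theorem rnk_conj (z : Equiv.Perm ℕ) (hz0 : z 0 = 0) (hinv : ∀ i, z (z i) = i) {p q r s : ℕ}
    (hp : z p = q) (hr : z r = s) (hq0 : 1 ≤ q) (hqp : q < p) (hpr : p < r) (hsr : s ≠ r)
    (hsq : q < s) (i j : ℕ) :
    rnk z i j = rnk (Equiv.swap p r * z * Equiv.swap p r) i j +
      (if p ≤ i ∧ i < r ∧ q ≤ j ∧ j < s then 1 else 0) +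
      (if q ≤ i ∧ i < s ∧ p ≤ j ∧ j < r then 1 else 0) := by
  have hsp : s ≠ p := by
    intro h
    have : z r = z q := by rw [hr, h, ← hp, hinv]
    have := z.injective this
    omega
  obtain ⟨e1, e2, e3, e4, e5⟩ := conj_apply z hinv hp hr hqp hpr hsr hsp
  have hq : z q = p := by rw [← hp, hinv]
  have hs : z s = r := by rw [← hr, hinv]
  set v := Equiv.swap p r * z * Equiv.swap p r with hv
  have hv0 : v 0 = 0 := by rw [e5 0 (by omega) (by omega) (by omega) (by omega), hz0]
  rw [rnk_eq_sum z hz0 i j (i + p + r + s) (by omega),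
    rnk_eq_sum v hv0 i j (i + p + r + s) (by omega)]
  rw [sum_four _ p q r s, sum_four _ p q r s (f := fun x => if x ≤ i ∧ v x ≤ j then 1 else 0)]
  · rw [e1, e2, e3, e4, hp, hq, hr, hs]
    have : ∑ x ∈ ((((Finset.Icc 1 (i + p + r + s)).erase p).erase q).erase r).erase s,
        (if x ≤ i ∧ v x ≤ j then 1 else 0) =
        ∑ x ∈ ((((Finset.Icc 1 (i + p + r + s)).erase p).erase q).erase r).erase s,
        (if x ≤ i ∧ z x ≤ j then 1 else 0) := by
      apply Finset.sum_congr rfl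
      intro x hx
      simp only [Finset.mem_erase] at hx
      rw [e5 x (by tauto) (by tauto) (by tauto) (by tauto)]
    rw [this]
    have h1 : (if p ≤ i ∧ q ≤ j then 1 else 0) + (if r ≤ i ∧ s ≤ j then 1 else 0) =
      (if p ≤ i ∧ s ≤ j then 1 else 0) + (if r ≤ i ∧ q ≤ j then 1 else 0) +
      (if p ≤ i ∧ i < r ∧ q ≤ j ∧ j < s then 1 else 0) := by
      split_ifs <;> omega
    have h2 : (if q ≤ i ∧ p ≤ j then 1 else 0) + (if s ≤ i ∧ r ≤ j then 1 else 0) =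
      (if s ≤ i ∧ p ≤ j then 1 else 0) + (if q ≤ i ∧ r ≤ j then 1 else 0) +
      (if q ≤ i ∧ i < s ∧ p ≤ j ∧ j < r then 1 else 0) := by
      split_ifs <;> omega
    omega
  all_goals first | omega | (rw [Finset.mem_Icc]; omega)

/-! ### lengths -/

/-- number of inversions of `w` inside `{0,…,N}` -/
def invN (N : ℕ) (w : Equiv.Perm ℕ) : ℕ :=
  ∑ i ∈ Finset.range (N + 1), ∑ j ∈ Finset.range (N + 1), if i < j ∧ w j < w i then 1 else 0

theorem sum_split (T : Finset ℕ) (a b : ℕ) (hab : a ≠ b) (ha : a ∉ T) (hb : b ∉ T)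
    (g : ℕ → ℕ → ℕ) :
    ∑ i ∈ insert a (insert b T), ∑ j ∈ insert a (insert b T), g i j =
      ∑ i ∈ T, ∑ j ∈ T, g i j + ∑ e ∈ T, (g a e + g e a + g b e + g e b) +
      (g a b + g b a + g a a + g b b) := by
  have ha' : a ∉ insert b T := by simp [hab, ha]
  simp only [Finset.sum_insert ha', Finset.sum_insert hb, Finset.sum_add_distrib]
  ring

theorem inv_swap (N : ℕ) (w : Equiv.Perm ℕ) {a b : ℕ} (hab : a < b) (hb : b ≤ N)
    (hw : w a < w b) :
    invN N w + 1 ≤ invN N (w * Equiv.swap a b) ∧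
    ((∀ e, a < e → e < b → w a < w e → w e < w b → False) →
      invN N (w * Equiv.swap a b) = invN N w + 1) := by
  set T := ((Finset.range (N + 1)).erase b).erase a with hT
  have hS : Finset.range (N + 1) = insert a (insert b T) := by
    ext x
    simp only [hT, Finset.mem_insert, Finset.mem_erase, Finset.mem_range]
    omega
  have haT : a ∉ T := by simp [hT]
  have hbT : b ∉ T := by simp [hT]
  set u := w * Equiv.swap a b with hu
  have ua : u a = w b := by simp [hu]
  have ub : u b = w a := by simp [hu]
  have ue : ∀ e ∈ T, u e = w e := by
    intro e he
    simp only [hT, Finset.mem_erase] at he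
    simp [hu, Equiv.swap_apply_of_ne_of_ne he.1 he.2.1]
  have we : ∀ e ∈ T, w e ≠ w a ∧ w e ≠ w b ∧ e ≠ a ∧ e ≠ b := by
    intro e he
    simp only [hT, Finset.mem_erase] at he
    exact ⟨fun h => he.1 (w.injective h), fun h => he.2.1 (w.injective h), he.1, he.2.1⟩
  rw [invN, invN, hS, sum_split T a b (by omega) haT hbT, sum_split T a b (by omega) haT hbT,
    ua, ub]
  have h1 : ∑ i ∈ T, ∑ j ∈ T, (if i < j ∧ u j < u i then 1 else 0) =
      ∑ i ∈ T, ∑ j ∈ T, if i < j ∧ w j < w i then 1 else 0 := by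
    apply Finset.sum_congr rfl
    intro i hi
    apply Finset.sum_congr rfl
    intro j hj
    rw [ue i hi, ue j hj]
  rw [h1]
  have k1 : (if a < b ∧ w b < w a then 1 else 0) + (if b < a ∧ w a < w b then 1 else 0) +
      (if a < a ∧ w a < w a then 1 else 0) + (if b < b ∧ w b < w b then 1 else 0) = 0 := by
    split_ifs <;> omega
  have k2 : (if a < b ∧ w a < w b then 1 else 0) + (if b < a ∧ w b < w a then 1 else 0) +
      (if a < a ∧ w b < w b then 1 else 0) + (if b < b ∧ w a < w a then 1 else 0) = 1 := by
    split_ifs <;> omega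
  rw [k1, k2]
  constructor
  · have h2 : ∑ e ∈ T, ((if a < e ∧ w e < w a then 1 else 0) + (if e < a ∧ w a < w e then 1 else 0)
        + (if b < e ∧ w e < w b then 1 else 0) + (if e < b ∧ w b < w e then 1 else 0)) ≤
        ∑ e ∈ T, ((if a < e ∧ u e < w b then 1 else 0) + (if e < a ∧ w b < u e then 1 else 0)
        + (if b < e ∧ u e < w a then 1 else 0) + (if e < b ∧ w a < u e then 1 else 0)) := by
      apply Finset.sum_le_sum
      intro e he
      rw [ue e he]
      have := we e he
      split_ifs <;> omega
    exact Nat.add_le_add (Nat.add_le_add_left h2 _) le_rfl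
  · intro hmin
    have h2 : ∑ e ∈ T, ((if a < e ∧ u e < w b then 1 else 0) + (if e < a ∧ w b < u e then 1 else 0)
        + (if b < e ∧ u e < w a then 1 else 0) + (if e < b ∧ w a < u e then 1 else 0)) =
        ∑ e ∈ T, ((if a < e ∧ w e < w a then 1 else 0) + (if e < a ∧ w a < w e then 1 else 0)
        + (if b < e ∧ w e < w b then 1 else 0) + (if e < b ∧ w b < w e then 1 else 0)) := by
      apply Finset.sum_congr rfl
      intro e he
      rw [ue e he]
      have := we e he
      have : ¬ (a < e ∧ e < b ∧ w a < w e ∧ w e < w b) :=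
        fun hh => hmin e hh.1 hh.2.1 hh.2.2.1 hh.2.2.2
      split_ifs <;> omega
    rw [h2]

theorem invN_card (N : ℕ) (w : Equiv.Perm ℕ) : invN N w =
    ((Finset.range (N + 1) ×ˢ Finset.range (N + 1)).filter
      fun x => x.1 < x.2 ∧ w x.2 < w x.1).card := by
  rw [invN, ← Finset.sum_product', Finset.card_filter]

theorem invN_inv (N : ℕ) (w : Equiv.Perm ℕ) (hw : ∀ i ≤ N, w i ≤ N) (hw' : ∀ i ≤ N, w⁻¹ i ≤ N) :
    invN N w⁻¹ = invN N w := by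
  have hi1 : ∀ x, w (w⁻¹ x) = x := fun x => w.apply_symm_apply x
  have hi2 : ∀ x, w⁻¹ (w x) = x := fun x => w.symm_apply_apply x
  rw [invN_card, invN_card]
  refine Finset.card_bij' (fun x _ => (w⁻¹ x.2, w⁻¹ x.1)) (fun x _ => (w x.2, w x.1)) ?_ ?_ ?_ ?_
  · rintro ⟨i, j⟩ h
    simp only [Finset.mem_filter, Finset.mem_product, Finset.mem_range, Order.lt_add_one_iff,
      hi1] at *
    exact ⟨⟨hw' _ h.1.2, hw' _ h.1.1⟩, h.2.2, h.2.1⟩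
  · rintro ⟨i, j⟩ h
    simp only [Finset.mem_filter, Finset.mem_product, Finset.mem_range, Order.lt_add_one_iff,
      hi2] at *
    exact ⟨⟨hw _ h.1.2, hw _ h.1.1⟩, h.2.2, h.2.1⟩
  · rintro ⟨i, j⟩ h; simp
  · rintro ⟨i, j⟩ h; simp

/-- `z` is a fixed-point-free involution preserving `[N]` and trivial outside -/
def Good (N : ℕ) (z : Equiv.Perm ℕ) : Prop :=
  z 0 = 0 ∧ (∀ i, 1 ≤ i → z i ≠ i) ∧ (∀ i, z (z i) = i) ∧ (∀ i ≤ N, z i ≤ N) ∧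
    ∀ i, N < i → z i = oneFPF i

theorem ell_inv (N : ℕ) (z : Equiv.Perm ℕ) (hg : Good N z) :
    2 * invN N z = 4 * ellFpf z + N := by
  obtain ⟨h0, hf, hinv, hN, hout⟩ := hg
  set S := Finset.range (N + 1) with hS
  have hSz : ∀ i, i ∈ S ↔ z i ∈ S := by
    intro i
    simp only [hS, Finset.mem_range, Order.lt_add_one_iff]
    exact ⟨hN i, fun h => by have := hN _ h; rwa [hinv] at this⟩
  have hpos : ∀ i, 1 ≤ i → 1 ≤ z i := by
    intro i hi
    by_contra h
    have h1 : z i = z 0 := by omega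
    have := z.injective h1
    omega
  let L := (S ×ˢ S).filter fun x => x.2 < x.1 ∧ x.2 < z x.1 ∧ x.1 < z x.2
  let U := (S ×ˢ S).filter fun x => x.1 < x.2 ∧ x.2 < z x.1 ∧ x.1 < z x.2
  let E := S.filter fun x => x < z x
  let E' := S.filter fun x => z x < x
  have e1 : invN N z = ((S ×ˢ S).filter fun x => x.2 < z x.1 ∧ x.1 < z x.2).card := by
    rw [invN_card]
    refine Finset.card_bij' (fun x _ => (x.1, z x.2)) (fun x _ => (x.1, z x.2)) ?_ ?_ ?_ ?_
    · rintro ⟨i, j⟩ h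
      simp only [Finset.mem_filter, Finset.mem_product, hinv] at *
      exact ⟨⟨h.1.1, (hSz j).1 h.1.2⟩, h.2.2, h.2.1⟩
    · rintro ⟨i, j⟩ h
      simp only [Finset.mem_filter, Finset.mem_product, hinv] at *
      exact ⟨⟨h.1.1, (hSz j).1 h.1.2⟩, h.2.2, h.2.1⟩
    · rintro ⟨i, j⟩ h; simp [hinv]
    · rintro ⟨i, j⟩ h; simp [hinv]
  have e2 : ((S ×ˢ S).filter fun x => x.2 < z x.1 ∧ x.1 < z x.2).card = L.card + U.card + E.card := by
    have hEd : E.card = ((S ×ˢ S).filter fun x => x.1 = x.2 ∧ x.2 < z x.1 ∧ x.1 < z x.2).card := by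
      refine Finset.card_bij' (fun x _ => (x, x)) (fun x _ => x.1) ?_ ?_ ?_ ?_
      · intro i h
        simp only [E, Finset.mem_filter, Finset.mem_product] at *
        tauto
      · rintro ⟨i, j⟩ h
        simp only [E, Finset.mem_filter, Finset.mem_product] at *
        obtain ⟨⟨h1, h2⟩, h3, h4, h5⟩ := h
        subst h3
        exact ⟨h1, h4⟩
      · simp
      · rintro ⟨i, j⟩ h
        simp only [Finset.mem_filter] at h
        simp [h.2.1]
    rw [hEd]
    simp only [L, U, Finset.card_filter, ← Finset.sum_add_distrib]
    apply Finset.sum_congr rfl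
    rintro ⟨i, j⟩ _
    simp only
    split_ifs <;> omega
  have e3 : U.card = L.card := by
    refine Finset.card_bij' (fun x _ => (x.2, x.1)) (fun x _ => (x.2, x.1)) ?_ ?_ ?_ ?_
    · rintro ⟨i, j⟩ h
      simp only [L, U, Finset.mem_filter, Finset.mem_product] at *
      tauto
    · rintro ⟨i, j⟩ h
      simp only [L, U, Finset.mem_filter, Finset.mem_product] at *
      tauto
    · simp
    · simp
  have e4 : E.card = E'.card := by
    refine Finset.card_bij' (fun x _ => z x) (fun x _ => z x) ?_ ?_ ?_ ?_
    · intro i h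
      simp only [E, E', Finset.mem_filter, hinv] at *
      exact ⟨(hSz i).1 h.1, h.2⟩
    · intro i h
      simp only [E, E', Finset.mem_filter, hinv] at *
      exact ⟨(hSz i).1 h.1, h.2⟩
    · intro i _; exact hinv i
    · intro i _; exact hinv i
  have e5 : E.card + E'.card = N := by
    have : E.card + E'.card = ∑ i ∈ S, if 1 ≤ i then 1 else 0 := by
      simp only [E, E', Finset.card_filter, ← Finset.sum_add_distrib]
      apply Finset.sum_congr rfl
      intro i _
      by_cases hi : 1 ≤ i
      · have := hf i hi
        split_ifs <;> omega
      · have : i = 0 := by omega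
        subst this
        simp [h0]
    rw [this, hS, Finset.sum_range_succ']
    simp
  have e6 : ellFpf z = L.card := by
    rw [ellFpf, ← Set.ncard_coe_finset]
    congr 1
    ext ⟨i, j⟩
    simp only [Dss, L, Set.mem_ofPred_eq, Finset.coe_filter, Finset.mem_product, hS,
      Finset.mem_range, Order.lt_add_one_iff]
    constructor
    · rintro ⟨h1, h2, h3, h4⟩
      have hi : i ≤ N := by
        by_contra hi
        by_cases hj : j ≤ N
        · have := hN j hj
          omega
        · rw [hout j (by omega)] at h4
          unfold oneFPF at h4
          split_ifs at h4 <;> omega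
      exact ⟨⟨hi, by omega⟩, h3, h2, h4⟩
    · rintro ⟨_, h3, h2, h4⟩
      refine ⟨?_, h2, h3, h4⟩
      by_contra h
      have : j = 0 := by omega
      subst this
      omega
  omega

theorem exists_good (z : Equiv.Perm ℕ) (hz : z ∈ IFPFInfty) (m : ℕ) :
    ∃ N, m ≤ N ∧ Good N z := by
  obtain ⟨h0, hf, hinv, N0, hN⟩ := hz
  have hinv' : ∀ i, z (z i) = i := fun i => by
    have := congrArg (fun f : Equiv.Perm ℕ => f i) hinv
    simpa using this
  refine ⟨2 * (N0 + m), by omega, h0, hf, hinv', ?_, fun i hi => hN i (by omega)⟩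
  intro i hi
  by_contra h
  have h1 := hN (z i) (by omega)
  rw [hinv', oneFPF] at h1
  split_ifs at h1 <;> omega

theorem good_conj (N : ℕ) (z : Equiv.Perm ℕ) (hg : Good N z) {p r : ℕ} (hp : 1 ≤ p) (hpr : p < r)
    (hr : r ≤ N) : Good N (Equiv.swap p r * z * Equiv.swap p r) := by
  obtain ⟨h0, hf, hinv, hN, hout⟩ := hg
  have hs : ∀ i ≤ N, Equiv.swap p r i ≤ N := by
    intro i hi
    rw [Equiv.swap_apply_def]
    split_ifs <;> omega
  have hs0 : Equiv.swap p r 0 = 0 := Equiv.swap_apply_of_ne_of_ne (by omega) (by omega)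
  refine ⟨?_, ?_, ?_, ?_, ?_⟩
  · simp [hs0, h0]
  · intro i hi h
    simp only [Equiv.Perm.mul_apply] at h
    have h2 : z (Equiv.swap p r i) = Equiv.swap p r i := by
      have := congrArg (Equiv.swap p r) h
      rwa [Equiv.swap_apply_self] at this
    apply hf (Equiv.swap p r i) _ h2
    by_contra hc
    have : Equiv.swap p r i = Equiv.swap p r 0 := by omega
    have := (Equiv.swap p r).injective this
    omega
  · intro i
    simp [hinv]
  · intro i hi
    simp only [Equiv.Perm.mul_apply]
    exact hs _ (hN _ (hs _ hi))
  · intro i hi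
    have : N < z i := by
      by_contra h
      have := hN (z i) (by omega)
      rw [hinv] at this
      omega
    simp only [Equiv.Perm.mul_apply]
    rw [Equiv.swap_apply_of_ne_of_ne (show i ≠ p by omega) (show i ≠ r by omega),
      Equiv.swap_apply_of_ne_of_ne (show z i ≠ p by omega) (show z i ≠ r by omega), hout i hi]

theorem ell_up (z : Equiv.Perm ℕ) (hz : z ∈ IFPFInfty) {p q r s : ℕ} (hp : z p = q) (hr : z r = s)
    (hq0 : 1 ≤ q) (hqp : q < p) (hpr : p < r) (hsq : q < s) (hs : s < p ∨ r < s)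
    (hmin : ∀ e, p < e → e < r → q < z e → z e < s → False) :
    ellFpf (Equiv.swap p r * z * Equiv.swap p r) = ellFpf z + 1 := by
  obtain ⟨N, hN, hg⟩ := exists_good z hz r
  have hg' := good_conj N z hg (by omega) hpr hN
  have h1 := ell_inv N z hg
  have h2 := ell_inv N _ hg'
  obtain ⟨h0, hf, hinv, hNz, hout⟩ := hg
  have hzi : z⁻¹ = z := by ext i; rw [Equiv.Perm.inv_eq_iff_eq, hinv]
  have hsw : ∀ i ≤ N, Equiv.swap p r i ≤ N := by
    intro i hi
    rw [Equiv.swap_apply_def]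
    split_ifs <;> omega
  have s1 := (inv_swap N z hpr hN (by omega)).2 (by rw [hp, hr]; exact hmin)
  have hui : (z * Equiv.swap p r)⁻¹ = Equiv.swap p r * z := by
    rw [mul_inv_rev, hzi, Equiv.swap_inv]
  have s2 : invN N (z * Equiv.swap p r)⁻¹ = invN N (z * Equiv.swap p r) := by
    apply invN_inv
    · intro i hi; exact hNz _ (hsw _ hi)
    · intro i hi; rw [hui]; exact hsw _ (hNz _ hi)
  rw [hui] at s2
  have tp : (Equiv.swap p r * z) p = q := by
    rw [Equiv.Perm.mul_apply, hp, Equiv.swap_apply_of_ne_of_ne (by omega) (by omega)]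
  have tr : (Equiv.swap p r * z) r = s := by
    rw [Equiv.Perm.mul_apply, hr, Equiv.swap_apply_of_ne_of_ne (by omega) (by omega)]
  have s3 := (inv_swap N (Equiv.swap p r * z) hpr hN (by rw [tp, tr]; exact hsq)).2 (by
    rw [tp, tr]
    intro e he1 he2
    have e1 : z e ≠ p := fun h => by
      have : e = q := by rw [← hp, ← h, hinv]
      omega
    have e2 : z e ≠ r := fun h => by
      have : e = s := by rw [← hr, ← h, hinv]
      omega
    rw [Equiv.Perm.mul_apply, Equiv.swap_apply_of_ne_of_ne e1 e2]
    exact hmin e he1 he2)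
  omega

theorem ell_down (z : Equiv.Perm ℕ) (hz : z ∈ IFPFInfty) {p q r s : ℕ} (hp : z p = q) (hr : z r = s)
    (hqp : q < p) (hpr : p < r) (hsq : s < q) :
    ellFpf (Equiv.swap p r * z * Equiv.swap p r) ≠ ellFpf z + 1 := by
  obtain ⟨N, hN, hg⟩ := exists_good z hz r
  have hg' := good_conj N z hg (by omega) hpr hN
  have h1 := ell_inv N z hg
  have h2 := ell_inv N _ hg'
  obtain ⟨h0, hf, hinv, hNz, hout⟩ := hg
  have hzi : z⁻¹ = z := by ext i; rw [Equiv.Perm.inv_eq_iff_eq, hinv]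
  have hsw : ∀ i ≤ N, Equiv.swap p r i ≤ N := by
    intro i hi
    rw [Equiv.swap_apply_def]
    split_ifs <;> omega
  have s1 := (inv_swap N (z * Equiv.swap p r) hpr hN (by simp [hp, hr, hsq])).1
  have hui : (z * Equiv.swap p r)⁻¹ = Equiv.swap p r * z := by
    rw [mul_inv_rev, hzi, Equiv.swap_inv]
  have s2 : invN N (z * Equiv.swap p r)⁻¹ = invN N (z * Equiv.swap p r) := by
    apply invN_inv
    · intro i hi; exact hNz _ (hsw _ hi)
    · intro i hi; rw [hui]; exact hsw _ (hNz _ hi)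
  rw [hui] at s2
  have tp : (Equiv.swap p r * z * Equiv.swap p r) p = s := by
    simp only [Equiv.Perm.mul_apply, Equiv.swap_apply_left]
    rw [hr, Equiv.swap_apply_of_ne_of_ne (by omega) (by omega)]
  have tr : (Equiv.swap p r * z * Equiv.swap p r) r = q := by
    simp only [Equiv.Perm.mul_apply, Equiv.swap_apply_right]
    rw [hp, Equiv.swap_apply_of_ne_of_ne (by omega) (by omega)]
  have s3 := (inv_swap N (Equiv.swap p r * z * Equiv.swap p r) hpr hN
    (by rw [tp, tr]; exact hsq)).1
  rw [mul_assoc, Equiv.swap_mul_self, mul_one] at s1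
  rw [mul_assoc (Equiv.swap p r * z), Equiv.swap_mul_self, mul_one] at s3
  omega

theorem zero_core (z : Equiv.Perm ℕ) (hz : z ∈ IFPFInfty) (hinv : ∀ i, z (z i) = i)
    (n : ℕ) {p q : ℕ} (R : ℕ → ℕ → ℕ)
    (hsym : ∀ i j, i ≤ n → j ≤ n → R i j = R j i)
    (heven : ∀ i, i ≤ n → Even (R i i))
    (hsup : ∀ a a' b b', a ≤ a' → b' ≤ b → R a b + R a' b' ≤ R a' b + R a b')
    (hle : ∀ i j, 1 ≤ i → i ≤ n → 1 ≤ j → j ≤ n → R i j ≤ rnk z i j)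
    (hq0 : 1 ≤ q) (hqp : q < p) (hp : z p = q)
    (hno : ∀ r, p < r → ellFpf (Equiv.swap p r * z * Equiv.swap p r) = ellFpf z + 1 →
      ∃ i j, 1 ≤ i ∧ i ≤ n ∧ 1 ≤ j ∧ j ≤ n ∧ rnk (Equiv.swap p r * z * Equiv.swap p r) i j < R i j)
    {r s : ℕ} (hpr : p < r) (hr : z r = s) (hsq : q < s) (hs : s < p ∨ r < s)
    (hmin : ∀ e, p < e → e < r → q < z e → z e < s → False) :
    ∃ a b, a ≤ n ∧ b ≤ n ∧ p ≤ a ∧ a < r ∧ q ≤ b ∧ b < s ∧ R a b = rnk z a b := by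
  obtain ⟨i, j, hi1, hin, hj1, hjn, hij⟩ := hno r hpr
    (ell_up z hz hp hr hq0 hqp hpr hsq hs hmin)
  have hz0 := hz.1
  have hc := rnk_conj z hz0 hinv hp hr hq0 hqp hpr (by omega) hsq i j
  have h1 := hle i j hi1 hin hj1 hjn
  have s1 := hsym i j hin hjn
  have s2 := rnk_symm z hinv i j
  by_cases hA : p ≤ i ∧ i < r ∧ q ≤ j ∧ j < s
  · by_cases hB : q ≤ i ∧ i < s ∧ p ≤ j ∧ j < r
    · rw [if_pos hA, if_pos hB] at hc
      by_cases h0 : R i j = rnk z i j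
      · exact ⟨i, j, hin, hjn, hA.1, hA.2.1, hA.2.2.1, hA.2.2.2, h0⟩
      have hD : R i j + 1 = rnk z i j := by omega
      have e1 := heven i hin
      have e2 := heven j hjn
      have e3 := rnk_even z hinv hz.2.1 i
      have e4 := rnk_even z hinv hz.2.1 j
      have l1 := hle i i hi1 hin hi1 hin
      have l2 := hle j j hj1 hjn hj1 hjn
      by_cases hii : R i i = rnk z i i
      · exact ⟨i, i, hin, hin, by omega, by omega, by omega, by omega, hii⟩
      by_cases hjj : R j j = rnk z j j
      · exact ⟨j, j, hjn, hjn, by omega, by omega, by omega, by omega, hjj⟩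
      rw [Nat.even_iff] at e1 e2 e3 e4
      exfalso
      rcases le_total i j with h | h
      · have a1 := hsup i j j i h h
        have a2 := rnk_rect z hz0 (a := i) (a' := j) (b := j) (b' := i) h h
          (fun x x1 x2 x3 x4 => hmin x (by omega) (by omega) (by omega) (by omega))
        omega
      · have a1 := hsup j i i j h h
        have a2 := rnk_rect z hz0 (a := j) (a' := i) (b := i) (b' := j) h h
          (fun x x1 x2 x3 x4 => hmin x (by omega) (by omega) (by omega) (by omega))
        omega
    · rw [if_pos hA, if_neg hB] at hc
      exact ⟨i, j, hin, hjn, hA.1, hA.2.1, hA.2.2.1, hA.2.2.2, by omega⟩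
  · by_cases hB : q ≤ i ∧ i < s ∧ p ≤ j ∧ j < r
    · rw [if_neg hA, if_pos hB] at hc
      exact ⟨j, i, hjn, hin, by omega, by omega, by omega, by omega, by omega⟩
    · rw [if_neg hA, if_neg hB] at hc
      omega

theorem zero_H (z : Equiv.Perm ℕ) (hz : z ∈ IFPFInfty) (hinv : ∀ i, z (z i) = i)
    (n : ℕ) {p q : ℕ} (R : ℕ → ℕ → ℕ)
    (hsym : ∀ i j, i ≤ n → j ≤ n → R i j = R j i)
    (heven : ∀ i, i ≤ n → Even (R i i))
    (hsup : ∀ a a' b b', a ≤ a' → b' ≤ b → R a b + R a' b' ≤ R a' b + R a b')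
    (hle : ∀ i j, 1 ≤ i → i ≤ n → 1 ≤ j → j ≤ n → R i j ≤ rnk z i j)
    (hq0 : 1 ≤ q) (hqp : q < p) (hp : z p = q)
    (hno : ∀ r, p < r → ellFpf (Equiv.swap p r * z * Equiv.swap p r) = ellFpf z + 1 →
      ∃ i j, 1 ≤ i ∧ i ≤ n ∧ 1 ≤ j ∧ j ≤ n ∧ rnk (Equiv.swap p r * z * Equiv.swap p r) i j < R i j)
    {r : ℕ} (hpr : p < r) (hr : q < z r) :
    ∃ a b, a ≤ n ∧ b ≤ n ∧ p ≤ a ∧ a < r ∧ q ≤ b ∧ b < z r ∧ R a b = rnk z a b := by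
  have hq : z q = p := by rw [← hp, hinv]
  classical
  have hex : ∃ e, p < e ∧ e ≤ r ∧ q < z e ∧ z e ≤ z r := ⟨r, hpr, le_rfl, hr, le_rfl⟩
  obtain ⟨h1, h2, h3, h4⟩ := Nat.find_spec hex
  have hm := fun e (he : e < Nat.find hex) => Nat.find_min hex he
  generalize Nat.find hex = t at *
  have hmin : ∀ e, p < e → e < t → q < z e → z e < z t → False := by
    intro e e1 e2 e3 e4
    exact hm e e2 ⟨e1, by omega, e3, by omega⟩
  have htt : z t ≠ t := hz.2.1 t (by omega)
  have htp : z t ≠ p := by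
    intro h
    have := hinv t
    rw [h, hp] at this
    omega
  by_cases hs : z t < p ∨ t < z t
  · obtain ⟨a, b, k1, k2, k3, k4, k5, k6, k7⟩ := zero_core z hz hinv n R hsym heven hsup hle hq0 hqp
      hp hno h1 rfl h3 hs hmin
    exact ⟨a, b, k1, k2, k3, by omega, k5, by omega, k7⟩
  · obtain ⟨a, b, k1, k2, k3, k4, k5, k6, k7⟩ := zero_core z hz hinv n R hsym heven hsup hle hq0 hqp
      hp hno (r := z t) (s := t) (by omega) (hinv t) (by omega) (by omega) (by
        intro e e1 e2 e3 e4
        have : z t ≤ z e := by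
          by_contra hlt
          exact hmin e e1 (by omega) e3 (by omega)
        have hne : z t ≠ z e := fun h => by
          have := z.injective h
          omega
        refine hmin (z e) (by omega) e4 ?_ ?_
        · rw [hinv]; omega
        · rw [hinv]; omega)
    by_cases hb : p ≤ b
    · exact ⟨b, a, k2, k1, hb, by omega, by omega, by omega, by
        rw [hsym b a k2 k1, rnk_symm z hinv b a, k7]⟩
    · exact ⟨a, b, k1, k2, k3, by omega, k5, by omega, k7⟩

theorem comb_main (z : Equiv.Perm ℕ) (hz : z ∈ IFPFInfty) (hinv : ∀ i, z (z i) = i)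
    (n : ℕ) {p q : ℕ} (R : ℕ → ℕ → ℕ)
    (hsym : ∀ i j, i ≤ n → j ≤ n → R i j = R j i)
    (heven : ∀ i, i ≤ n → Even (R i i))
    (hsup : ∀ a a' b b', a ≤ a' → b' ≤ b → R a b + R a' b' ≤ R a' b + R a b')
    (hrows : ∀ a b d, R (a + d) b ≤ R a b + d)
    (hle : ∀ i j, 1 ≤ i → i ≤ n → 1 ≤ j → j ≤ n → R i j ≤ rnk z i j)
    (hq0 : 1 ≤ q) (hqp : q < p) (hpn : p ≤ n) (hp : z p = q)
    (hR : R p q = 0) (hrk : 1 ≤ rnk z p q) :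
    ∃ r, p < r ∧ ellFpf (Equiv.swap p r * z * Equiv.swap p r) = ellFpf z + 1 ∧
      ∀ i j, 1 ≤ i → i ≤ n → 1 ≤ j → j ≤ n →
        R i j ≤ rnk (Equiv.swap p r * z * Equiv.swap p r) i j := by
  by_contra hcon
  have hno : ∀ r, p < r → ellFpf (Equiv.swap p r * z * Equiv.swap p r) = ellFpf z + 1 →
      ∃ i j, 1 ≤ i ∧ i ≤ n ∧ 1 ≤ j ∧ j ≤ n ∧
        rnk (Equiv.swap p r * z * Equiv.swap p r) i j < R i j := by
    intro r hr hl
    by_contra hc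
    refine hcon ⟨r, hr, hl, fun i j h1 h2 h3 h4 => ?_⟩
    by_contra h5
    exact hc ⟨i, j, h1, h2, h3, h4, by omega⟩
  have hz0 := hz.1
  have H := fun r => zero_H z hz hinv n R hsym heven hsup hle hq0 hqp hp hno (r := r)
  classical
  have hex1 : ∃ r, p < r ∧ q < z r := by
    obtain ⟨N, hN, hg⟩ := exists_good z hz (p + q + 1)
    refine ⟨N + 1, by omega, ?_⟩
    rw [hg.2.2.2.2 (N + 1) (by omega), oneFPF]
    split_ifs <;> omega
  have hex2 : ∃ b, q ≤ b ∧ b ≤ n ∧ R p b = rnk z p b := by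
    obtain ⟨h1, h2⟩ := Nat.find_spec hex1
    have hm := fun e (he : e < Nat.find hex1) => Nat.find_min hex1 he
    generalize Nat.find hex1 = t at *
    obtain ⟨a, b, k1, k2, k3, k4, k5, k6, k7⟩ := H t h1 h2
    refine ⟨b, k5, k2, ?_⟩
    obtain ⟨d, rfl⟩ := Nat.exists_eq_add_of_le k3
    have := rnk_rows z hz0 p d b (by
      intro x x1 x2
      by_contra hx
      exact hm x (by omega) ⟨x1, by omega⟩)
    have h3 := hrows p b d
    have h4 := hle p b (by omega) hpn (by omega) k2
    omega
  obtain ⟨h1, h2, h3⟩ := Nat.find_spec hex2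
  have hm := fun e (he : e < Nat.find hex2) => Nat.find_min hex2 he
  generalize Nat.find hex2 = β at *
  by_cases hex3 : ∃ r, p < r ∧ q < z r ∧ z r ≤ β
  · obtain ⟨g1, g2, g3⟩ := Nat.find_spec hex3
    have hm3 := fun e (he : e < Nat.find hex3) => Nat.find_min hex3 he
    generalize Nat.find hex3 = t at *
    obtain ⟨a, b, k1, k2, k3, k4, k5, k6, k7⟩ := H t g1 g2
    refine hm b (by omega) ⟨k5, k2, ?_⟩
    have a1 := hsup p a β b k3 (by omega)
    have a2 := rnk_rect z hz0 (a := p) (a' := a) (b := β) (b' := b) k3 (by omega)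
      (fun x x1 x2 x3 x4 => hm3 x (by omega) ⟨x1, by omega, x4⟩)
    have a3 := hle p b (by omega) hpn (by omega) k2
    have a4 := hle a β (by omega) k1 (by omega) h2
    omega
  · obtain ⟨d, rfl⟩ := Nat.exists_eq_add_of_le h1
    have a1 := rnk_rows z hz0 q d p (by
      intro x x1 x2
      by_contra hx
      exact hex3 ⟨z x, by omega, by rw [hinv]; omega, by rw [hinv]; omega⟩)
    have a2 := hrows q p d
    rw [rnk_symm z hinv, rnk_symm z hinv q p] at a1
    rw [hsym _ _ h2 hpn, hsym _ _ (by omega) hpn] at a2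
    omega

theorem corner_facts (z : Equiv.Perm ℕ) (p q : ℕ)
    (hoc : IsOuterCorner z p q) (hqp : q < p) :
    z p = q ∧ rnk z p q = 1 := by
  obtain ⟨hp1, hq1, hnd, ha, hb⟩ := hoc
  have ha' : rnk z (p - 1) q = 0 := by
    rcases ha with h | h
    · omega
    · exact h.2.2
  have hb' : rnk z p (q - 1) = 0 := by
    rcases hb with h | h
    · subst h; simp [rnk]
    · exact h.2.2
  have hc : rnk z p q ≠ 0 := fun h => hnd ⟨hp1, hq1, h⟩
  have hall : ∀ x, 1 ≤ x → x ≤ p → 1 ≤ z x → z x ≤ q → x = p ∧ z x = q := by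
    intro x h1 h2 h3 h4
    rw [rnk, Finset.card_eq_zero, Finset.filter_eq_empty_iff] at ha' hb'
    constructor
    · by_contra hx
      exact ha' (x := x) (Finset.mem_Icc.2 ⟨h1, by omega⟩) (Finset.mem_Icc.2 ⟨h3, h4⟩)
    · by_contra hx
      exact hb' (x := x) (Finset.mem_Icc.2 ⟨h1, by omega⟩) (Finset.mem_Icc.2 ⟨h3, by omega⟩)
  obtain ⟨x, hx⟩ := Finset.card_ne_zero.1 (by rw [rnk] at hc; exact hc)
  simp only [Finset.mem_filter, Finset.mem_Icc] at hx
  obtain ⟨e1, e2⟩ := hall x hx.1.1 hx.1.2 hx.2.1 hx.2.2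
  subst e1
  refine ⟨e2, ?_⟩
  rw [rnk, Finset.card_eq_one]
  refine ⟨x, ?_⟩
  ext y
  simp only [Finset.mem_filter, Finset.mem_Icc, Finset.mem_singleton]
  constructor
  · rintro ⟨⟨a, b⟩, c, d⟩
    exact (hall y a b c d).1
  · rintro rfl
    exact hx


/-- Let `z ∈ FPF_n(I_n)` and let `(p,q)` be an outer corner of
`dom(z)` with `n ≥ p > q`. With
`X^ss_{p,q} = {A ∈ Mat^ss_n(K) : A_{ij} = 0 for (i,j) ∈ ([p] × [q]) ∪ ([q] × [p])}`,
one has `X^ss_z ∩ X^ss_{p,q} = ⋃_{v ∈ Ψ(z,p)} X^ss_v`. -/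
theorem statement16 (K : Type*) [Field K] [IsAlgClosed K] (n : ℕ) (hn : 1 ≤ n)
    (z : Equiv.Perm ℕ) (hz : z ∈ FPFIn n) (p q : ℕ) (hoc : IsOuterCorner z p q)
    (hpn : p ≤ n) (hqp : q < p) :
    Xss K n z ∩ {A | A ∈ MatSS K n ∧ ∀ a b : Fin n,
        (((a : ℕ) + 1 ≤ p ∧ (b : ℕ) + 1 ≤ q) ∨ ((a : ℕ) + 1 ≤ q ∧ (b : ℕ) + 1 ≤ p)) →
        A a b = 0} =
      ⋃ v ∈ PsiSet z p, Xss K n v := by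
  obtain ⟨hz, -⟩ := hz
  have hinv : ∀ i, z (z i) = i := fun i => by
    have := congrArg (fun f : Equiv.Perm ℕ => f i) hz.2.2.1
    simpa using this
  obtain ⟨hp, hrk⟩ := corner_facts z p q hoc hqp
  have hq0 : 1 ≤ q := hoc.2.1
  ext A
  simp only [Set.mem_inter_iff, Set.mem_setOf_eq, Set.mem_iUnion, exists_prop]
  constructor
  · rintro ⟨⟨hA, hX⟩, -, h0⟩
    obtain ⟨r, hr, hl, hv⟩ := comb_main z hz hinv n (p := p) (q := q) (fun i j => RA A i j)
      (fun i j hi hj => RA_symm A hA.1 hi hj) (fun i hi => RA_even A hA.1 hA.2 hi)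
      (fun a a' b b' h1 h2 => RA_super A h1 h2) (fun a b d => RA_rows A a b d)
      (fun i j h1 h2 h3 h4 => by
        have := hX i j h2 h4 h1 h3
        rwa [rank_eq_RA] at this)
      hq0 hqp hpn hp
      ((RA_zero A hpn (by omega)).2 fun a b ha hb => h0 a b (Or.inl ⟨by omega, by omega⟩))
      (by omega)
    refine ⟨_, ⟨r, hr, rfl, hl⟩, hA, ?_⟩
    intro i j hi hj h1 h2
    rw [rank_eq_RA]
    exact hv i j h1 hi h2 hj
  · rintro ⟨v, ⟨r, hr, rfl, hl⟩, hA, hX⟩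
    have hsr : z r ≠ r := hz.2.1 r (by omega)
    have hsq : q < z r := by
      by_contra hlt
      have hne : z r ≠ q := fun h => by
        have := z.injective (h.trans hp.symm)
        omega
      exact ell_down z hz hp rfl hqp hr (by omega) hl
    have hc := rnk_conj z hz.1 hinv hp rfl hq0 hqp hr hsr hsq
    have hpq : RA A p q = 0 := by
      have h1 := hX p q hpn (by omega) (by omega) hq0
      rw [rank_eq_RA] at h1
      have h2 := hc p q
      rw [if_pos ⟨le_rfl, hr, le_rfl, hsq⟩] at h2
      omega
    have h0 := (RA_zero A hpn (by omega)).1 hpq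
    refine ⟨⟨hA, ?_⟩, hA, ?_⟩
    · intro i j hi hj h1 h2
      have h3 := hX i j hi hj h1 h2
      have h4 := hc i j
      omega
    · rintro a b (⟨h1, h2⟩ | ⟨h1, h2⟩)
      · exact h0 a b (by omega) (by omega)
      · have h3 := h0 b a (by omega) (by omega)
        have h4 := congrFun (congrFun hA.1 b) a
        rw [Matrix.transpose_apply, Matrix.neg_apply, h3, neg_zero] at h4
        exact h4

end Paper
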